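/- (Correctness of the Threshold Decay framework.) Let ε ∈ (0,1), let T ≥ 10 be an integer, U ≥ 2, let L be an n×n invertible RDDL matrix with integer entries in [−U, U], and let b be a nonnegative vector with integer entries in [0, U]. Set ε_L := ε/(64·T·(nU)²). Suppose subsets S^(0) ⊇ S^(1) ⊇ ⋯ ⊇ S^(T) of [n] and vectors x̂^(t) (indexed by S^(t)), b̂^(t) (indexed by S^(t), nonnegative), x̃^(t) (indexed by [n]\S^(t)) satisfy: S^(0) = [n], b̂^(0) = b, and for each 0 ≤ t < T: (i) ‖x̂^(t) − (L_{S^(t),S^(t)})^{-1} b̂^(t)‖₂ ≤ ε_L·‖b̂^(t)‖₂; (ii) θ_t is the smallest power of two strictly larger than ‖b̂^(t)‖₁/(4(nU)²); (iii) F^(t) = { i ∈ S^(t) : x̂^(t)_i ≥ θ_t } and S^(t+1) = S^(t) \ F^(t); (iv) x̃^(t+1) agrees with x̃^(t) on [n]\S^(t) and with x̂^(t) on F^(t); (v) b̂^(t+1) ≈_{ε/(8T)} b_{S^(t+1)} − L_{S^(t+1), [n]\S^(t+1)} x̃^(t+1) entrywise. Let A := [n] \ S^(T) and let x̃ ∈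 ℝ^n equal x̃^(T) on A and 0 on S^(T). Then: (a) every index i with (L^{-1}b)_i ≥ (nU)^{-(T+1)}·‖b‖₁ belongs to A; (b) x̃_A ≈_ε (L^{-1}b)_A entrywise; (c) if moreover T = n, then x̃ ≈_ε L^{-1}b entrywise (the entries of L^{-1}b outside A being exactly zero). -/

import Mathlib

open Matrix

/-- A matrix `M` (over any finite index type) is an RDDL matrix. -/
def IsRDDL {ι : Type*} [Fintype ι] [DecidableEq ι] (M : Matrix ι ι ℝ) : Prop :=
  (∀ i, 0 < M i i) ∧ (∀ i j, i ≠ j → M i j ≤ 0) ∧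
    (∀ i, ∑ j ∈ Finset.univ.erase i, |M i j| ≤ M i i)

/-- The submatrix `M_{S,T}` of `M` with rows indexed by `S` and columns indexed by `T`. -/
def submatrixOn {n : ℕ} (M : Matrix (Fin n) (Fin n) ℝ) (S T : Finset (Fin n)) :
    Matrix {i // i ∈ S} {j // j ∈ T} ℝ :=
  Matrix.of fun i j => M i.val j.val

/-- `a ≈_ε b` : `e^{-ε}·a ≤ b ≤ e^{ε}·a`. -/
def EApprox (ε a b : ℝ) : Prop := Real.exp (-ε) * a ≤ b ∧ b ≤ Real.exp ε * a

theorem td_mono {n : ℕ} (L : Matrix (Fin n) (Fin n) ℝ) (hoff : ∀ i j, i ≠ j → L i j ≤ 0)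
    (S : Finset (Fin n)) (w : Fin n → ℝ) (hw : ∀ i ∈ S, 0 < w i)
    (hLw : ∀ i ∈ S, 0 < ∑ j ∈ S, L i j * w j) (y : Fin n → ℝ)
    (hy : ∀ i ∈ S, 0 ≤ ∑ j ∈ S, L i j * y j) : ∀ i ∈ S, 0 ≤ y i := by
  intro i0 hi0
  by_contra hneg
  push Not at hneg
  obtain ⟨i, hi, hmin⟩ := S.exists_min_image (fun i => y i / w i) ⟨i0, hi0⟩
  have hm : y i / w i < 0 := lt_of_le_of_lt (hmin i0 hi0) (div_neg_of_neg_of_pos hneg (hw i0 hi0))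
  have h1 : ∑ j ∈ S, L i j * y j ≤ ∑ j ∈ S, (y i / w i) * (L i j * w j) := by
    apply Finset.sum_le_sum
    intro j hj
    have hwj := hw j hj
    by_cases hij : i = j
    · subst hij
      have : y i / w i * (L i i * w i) = L i i * y i := by field_simp
      rw [this]
    · have h2 := hmin j hj
      have h3 : (y i / w i) * w j ≤ y j := by
        have := (le_div_iff₀ hwj).1 h2
        exact this
      nlinarith [hoff i j hij]
  rw [← Finset.mul_sum] at h1
  nlinarith [hLw i hi, hy i hi]

theorem td_rowsum {n : ℕ} (L : Matrix (Fin n) (Fin n) ℝ) (hL : IsRDDL L) (i : Fin n) :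
    0 ≤ ∑ j, L i j := by
  rw [← Finset.add_sum_erase _ _ (Finset.mem_univ i)]
  have h := hL.2.2 i
  have h2 : ∑ j ∈ Finset.univ.erase i, -|L i j| ≤ ∑ j ∈ Finset.univ.erase i, L i j :=
    Finset.sum_le_sum fun j _ => neg_abs_le _
  rw [Finset.sum_neg_distrib] at h2
  linarith

theorem td_injective_isUnit {ι : Type*} [Fintype ι] [DecidableEq ι] (M : Matrix ι ι ℝ)
    (h : ∀ y : ι → ℝ, M *ᵥ y = 0 → y = 0) : IsUnit M := by
  rw [← Matrix.mulVec_injective_iff_isUnit]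
  intro a c hac
  have := h (a - c) (by rw [Matrix.mulVec_sub]; exact sub_eq_zero.2 hac)
  exact sub_eq_zero.1 this

theorem td_inv_pert {n : ℕ} (L : Matrix (Fin n) (Fin n) ℝ) (hL : IsRDDL L) (η : ℝ) (hη : 0 < η)
    (i k : Fin n) :
    0 ≤ (L + η • (1 : Matrix (Fin n) (Fin n) ℝ)).det *
      (L + η • (1 : Matrix (Fin n) (Fin n) ℝ)).adjugate i k := by
  set M := L + η • (1 : Matrix (Fin n) (Fin n) ℝ) with hM
  have hoff : ∀ i j, i ≠ j → M i j ≤ 0 := by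
    intro i j hij
    simp [hM, Matrix.one_apply_ne hij, hL.2.1 i j hij]
  have hmono : ∀ y : Fin n → ℝ, (∀ i, 0 ≤ (M *ᵥ y) i) → ∀ i, 0 ≤ y i := by
    intro y hy i
    refine td_mono M hoff Finset.univ (fun _ => 1) (by simp) ?_ y
      (fun i _ => hy i) i (Finset.mem_univ i)
    intro i _
    have h := td_rowsum L hL i
    simp [hM, Matrix.add_apply, Finset.sum_add_distrib, Matrix.one_apply]
    linarith
  have hk := hmono (fun i => M.det * M.adjugate i k) (by
    intro i
    have h1 : (M *ᵥ fun i => M.det * M.adjugate i k) i = M.det * (M * M.adjugate) i k := by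
      simp only [Matrix.mulVec, dotProduct, Matrix.mul_apply, Finset.mul_sum]
      exact Finset.sum_congr rfl fun j _ => by ring
    rw [h1, Matrix.mul_adjugate]
    by_cases hik : i = k
    · subst hik; simp; exact mul_self_nonneg _
    · simp [Matrix.one_apply_ne hik])
  exact hk i

theorem td_inv_nonneg {n : ℕ} (L : Matrix (Fin n) (Fin n) ℝ) (hL : IsRDDL L)
    (i k : Fin n) : 0 ≤ L⁻¹ i k := by
  have hcont : Continuous fun η : ℝ => (L + η • (1 : Matrix (Fin n) (Fin n) ℝ)).det *
      (L + η • (1 : Matrix (Fin n) (Fin n) ℝ)).adjugate i k := by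
    have hc : Continuous fun η : ℝ => L + η • (1 : Matrix (Fin n) (Fin n) ℝ) := by fun_prop
    exact hc.matrix_det.mul (hc.matrix_adjugate.matrix_elem i k)
  have h0 : 0 ≤ L.det * L.adjugate i k := by
    have ht := (hcont.tendsto 0).mono_left (nhdsWithin_le_nhds (s := Set.Ioi 0))
    simp only [zero_smul, add_zero] at ht
    refine ge_of_tendsto ht ?_
    filter_upwards [self_mem_nhdsWithin] with η hη
    exact td_inv_pert L hL η hη i k
  rw [Matrix.inv_def]
  simp only [Matrix.smul_apply, smul_eq_mul, Ring.inverse_eq_inv']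
  by_cases hd : L.det = 0
  · simp [hd]
  · have : L.det⁻¹ * L.adjugate i k = (L.det⁻¹)^2 * (L.det * L.adjugate i k) := by field_simp
    rw [this]; positivity

theorem td_inv_mulVec {ι : Type*} [Fintype ι] [DecidableEq ι] (M : Matrix ι ι ℝ)
    (h : IsUnit M) (b : ι → ℝ) : M *ᵥ (M⁻¹ *ᵥ b) = b := by
  rw [Matrix.mulVec_mulVec, Matrix.mul_nonsing_inv _ ((Matrix.isUnit_iff_isUnit_det M).1 h),
    Matrix.one_mulVec]

theorem td_inv_mulVec_nonneg {n : ℕ} (L : Matrix (Fin n) (Fin n) ℝ) (hL : IsRDDL L)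
    (b : Fin n → ℝ) (hb : ∀ i, 0 ≤ b i) (i : Fin n) : 0 ≤ (L⁻¹ *ᵥ b) i := by
  simp only [Matrix.mulVec, dotProduct]
  exact Finset.sum_nonneg fun k _ => mul_nonneg (td_inv_nonneg L hL i k) (hb k)

theorem td_sub_mono {n : ℕ} (L : Matrix (Fin n) (Fin n) ℝ) (hL : IsRDDL L) (hInv : IsUnit L)
    (S : Finset (Fin n)) (y : Fin n → ℝ)
    (hy : ∀ i ∈ S, 0 ≤ ∑ j ∈ S, L i j * y j) : ∀ i ∈ S, 0 ≤ y i := by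
  set w : Fin n → ℝ := L⁻¹ *ᵥ (fun _ => 1) with hwdef
  have hw0 : ∀ i, 0 ≤ w i := td_inv_mulVec_nonneg L hL _ (by simp)
  have hLw : ∀ i, ∑ j, L i j * w j = 1 := fun i => congrFun (td_inv_mulVec L hInv (fun _ => 1)) i
  have hsub : ∀ (S : Finset (Fin n)) i, i ∈ S → 1 ≤ ∑ j ∈ S, L i j * w j := by
    intro S i hi
    rw [← hLw i, ← Finset.sum_add_sum_compl S]
    have : ∑ j ∈ Sᶜ, L i j * w j ≤ 0 := by
      apply Finset.sum_nonpos
      intro j hj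
      have hij : i ≠ j := by rintro rfl; simp_all
      exact mul_nonpos_of_nonpos_of_nonneg (hL.2.1 i j hij) (hw0 j)
    linarith
  refine td_mono L hL.2.1 S w ?_ (fun i hi => by linarith [hsub S i hi]) y hy
  intro i _
  have := hsub {i} i (by simp)
  simp at this
  rcases (hw0 i).lt_or_eq with h | h
  · exact h
  · rw [← h] at this; norm_num at this

theorem td_sub_unit {n : ℕ} (L : Matrix (Fin n) (Fin n) ℝ) (hL : IsRDDL L) (hInv : IsUnit L)
    (S : Finset (Fin n)) : IsUnit (submatrixOn L S S) := by
  classical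
  apply td_injective_isUnit
  intro y hy
  let f : Fin n → ℝ := fun i => if h : i ∈ S then y ⟨i, h⟩ else 0
  have hf : ∀ i ∈ S, ∑ j ∈ S, L i j * f j = 0 := by
    intro i hi
    have h1 := congrFun hy ⟨i, hi⟩
    rw [← Finset.sum_coe_sort]
    simpa [Matrix.mulVec, dotProduct, submatrixOn, f] using h1
  have h1 := td_sub_mono L hL hInv S f (fun i hi => (hf i hi).ge)
  have h2 := td_sub_mono L hL hInv S (fun i => - f i) (fun i hi => by simp [hf i hi])
  funext ⟨i, hi⟩
  have e : f i = y ⟨i, hi⟩ := by simp [f, hi]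
  have := h1 i hi
  have := h2 i hi
  simp only [Pi.zero_apply]
  linarith

/-- the exact solution of the reduced system, extended by zero -/
theorem td_exists_sol {n : ℕ} (L : Matrix (Fin n) (Fin n) ℝ) (hL : IsRDDL L) (hInv : IsUnit L)
    (S : Finset (Fin n)) (c xh : Fin n → ℝ) (e : ℝ) (he : 0 ≤ e)
    (hs : Real.sqrt (∑ i : {i // i ∈ S},
          (xh i.val - ((submatrixOn L S S)⁻¹ *ᵥ fun j : {j // j ∈ S} => c j.val) i) ^ 2)
        ≤ e * Real.sqrt (∑ i ∈ S, (c i) ^ 2)) :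
    ∃ y : Fin n → ℝ, (∀ i ∈ S, ∑ j ∈ S, L i j * y j = c i) ∧
      ∀ i ∈ S, |xh i - y i| ≤ e * ∑ i ∈ S, |c i| := by
  classical
  set z := (submatrixOn L S S)⁻¹ *ᵥ fun j : {j // j ∈ S} => c j.val with hz
  have hz2 := td_inv_mulVec _ (td_sub_unit L hL hInv S) (fun j : {j // j ∈ S} => c j.val)
  rw [← hz] at hz2
  refine ⟨fun i => if h : i ∈ S then z ⟨i, h⟩ else 0, ?_, ?_⟩
  · intro i hi
    have h1 := congrFun hz2 ⟨i, hi⟩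
    rw [← Finset.sum_coe_sort]
    simpa [Matrix.mulVec, dotProduct, submatrixOn] using h1
  · intro i hi
    simp only [hi, dif_pos]
    have h1 : |xh i - z ⟨i, hi⟩| ≤ Real.sqrt (∑ i : {i // i ∈ S}, (xh i.val - z i) ^ 2) := by
      apply Real.abs_le_sqrt
      exact Finset.single_le_sum (f := fun i : {i // i ∈ S} => (xh i.val - z i) ^ 2)
        (fun _ _ => sq_nonneg _) (Finset.mem_univ (⟨i, hi⟩ : {i // i ∈ S}))
    have h2 : Real.sqrt (∑ i ∈ S, (c i) ^ 2) ≤ ∑ i ∈ S, |c i| := by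
      apply Real.sqrt_le_iff.2 ⟨Finset.sum_nonneg fun _ _ => abs_nonneg _, ?_⟩
      have := Finset.sum_sq_le_sq_sum_of_nonneg (s := S) (f := fun i => |c i|)
        (fun _ _ => abs_nonneg _)
      simpa [sq_abs] using this
    exact h1.trans (hs.trans (mul_le_mul_of_nonneg_left h2 he))

theorem EApprox.symm' {e a b : ℝ} (h : EApprox e a b) : EApprox e b a := by
  obtain ⟨h1, h2⟩ := h
  have hp := Real.exp_pos e
  have hq := Real.exp_pos (-e)
  have hm : Real.exp e * Real.exp (-e) = 1 := by rw [← Real.exp_add]; simp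
  constructor
  · have := mul_le_mul_of_nonneg_left h2 hq.le
    calc _ ≤ _ := this
      _ = (Real.exp e * Real.exp (-e)) * a := by ring
      _ = a := by rw [hm, one_mul]
  · have := mul_le_mul_of_nonneg_left h1 hp.le
    calc a = (Real.exp e * Real.exp (-e)) * a := by rw [hm, one_mul]
      _ = Real.exp e * (Real.exp (-e) * a) := by ring
      _ ≤ _ := this

theorem EApprox.trans' {e f a b c : ℝ} (h : EApprox e a b) (h' : EApprox f b c) :
    EApprox (e + f) a c := by
  obtain ⟨h1, h2⟩ := h
  obtain ⟨h3, h4⟩ := h'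
  constructor
  · rw [neg_add, Real.exp_add]
    nlinarith [Real.exp_pos (-f)]
  · rw [Real.exp_add]
    nlinarith [Real.exp_pos f]

theorem EApprox.mono' {e f a b : ℝ} (ha : 0 ≤ a) (hef : e ≤ f) (h : EApprox e a b) :
    EApprox f a b := by
  constructor
  · exact le_trans (mul_le_mul_of_nonneg_right (Real.exp_le_exp.2 (by linarith)) ha) h.1
  · exact h.2.trans (mul_le_mul_of_nonneg_right (Real.exp_le_exp.2 hef) ha)

theorem EApprox.nonneg' {e a b : ℝ} (ha : 0 ≤ a) (h : EApprox e a b) : 0 ≤ b :=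
  le_trans (mul_nonneg (Real.exp_pos _).le ha) h.1

theorem td_rhs_approx {n : ℕ} (L : Matrix (Fin n) (Fin n) ℝ) (hL : IsRDDL L)
    (S : Finset (Fin n)) (b x xt : Fin n → ℝ) (e : ℝ) (he : 0 ≤ e) (hb : ∀ i, 0 ≤ b i)
    (hx : ∀ i ∉ S, EApprox e (xt i) (x i)) (i : Fin n) (hi : i ∈ S) :
    EApprox e (b i - ∑ j ∈ Sᶜ, L i j * xt j) (b i - ∑ j ∈ Sᶜ, L i j * x j) := by
  have hoff : ∀ j ∈ Sᶜ, L i j ≤ 0 := by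
    intro j hj
    exact hL.2.1 i j (by rintro rfl; simp_all)
  have h1 : 1 ≤ Real.exp e := Real.one_le_exp he
  have h2 : Real.exp (-e) ≤ 1 := Real.exp_le_one_iff.2 (by linarith)
  constructor
  · have : ∑ j ∈ Sᶜ, L i j * x j ≤ ∑ j ∈ Sᶜ, Real.exp (-e) * (L i j * xt j) := by
      refine Finset.sum_le_sum fun j hj => ?_
      nlinarith [hoff j hj, (hx j (by simpa using hj)).1]
    rw [← Finset.mul_sum] at this
    nlinarith [hb i]
  · have : ∑ j ∈ Sᶜ, Real.exp e * (L i j * xt j) ≤ ∑ j ∈ Sᶜ, L i j * x j := by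
      refine Finset.sum_le_sum fun j hj => ?_
      nlinarith [hoff j hj, (hx j (by simpa using hj)).2]
    rw [← Finset.mul_sum] at this
    nlinarith [hb i]

theorem td_sol_approx {n : ℕ} (L : Matrix (Fin n) (Fin n) ℝ) (hL : IsRDDL L) (hInv : IsUnit L)
    (S : Finset (Fin n)) (y x : Fin n → ℝ) (e : ℝ)
    (h : ∀ i ∈ S, EApprox e (∑ j ∈ S, L i j * y j) (∑ j ∈ S, L i j * x j)) :
    ∀ i ∈ S, EApprox e (y i) (x i) := by
  intro i hi
  constructor
  · have := td_sub_mono L hL hInv S (fun i => x i - Real.exp (-e) * y i) (by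
      intro i hi
      have h1 := (h i hi).1
      have : ∑ j ∈ S, L i j * (x j - Real.exp (-e) * y j) =
        ∑ j ∈ S, L i j * x j - Real.exp (-e) * ∑ j ∈ S, L i j * y j := by
        rw [Finset.mul_sum, ← Finset.sum_sub_distrib]
        exact Finset.sum_congr rfl fun j _ => by ring
      rw [this]; linarith) i hi
    linarith
  · have := td_sub_mono L hL hInv S (fun i => Real.exp e * y i - x i) (by
      intro i hi
      have h1 := (h i hi).2
      have : ∑ j ∈ S, L i j * (Real.exp e * y j - x j) =
        Real.exp e * (∑ j ∈ S, L i j * y j) - ∑ j ∈ S, L i j * x j := by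
        rw [Finset.mul_sum, ← Finset.sum_sub_distrib]
        exact Finset.sum_congr rfl fun j _ => by ring
      rw [this]; linarith) i hi
    linarith

theorem td_close_approx {d a b : ℝ} (hd : 0 ≤ d) (hd1 : d ≤ 1) (ha : 0 ≤ a)
    (h : |a - b| ≤ d / 2 * a) : EApprox d a b := by
  rw [abs_le] at h
  have h1 : d + 1 ≤ Real.exp d := Real.add_one_le_exp d
  have hm : Real.exp d * Real.exp (-d) = 1 := by rw [← Real.exp_add]; simp
  have h2 : Real.exp (-d) ≤ 1 - d / 2 := by
    nlinarith [Real.exp_pos (-d)]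
  constructor <;> nlinarith

/-- column sums: `∑_{i ∈ S} (L_{SS} x)_i ≤ U ∑_{S} x ≤ n U m` -/
theorem td_sum_le {n : ℕ} (L : Matrix (Fin n) (Fin n) ℝ) (hL : IsRDDL L) (U m : ℝ)
    (hU : ∀ i j, L i j ≤ U) (hU0 : 0 ≤ U) (hm0 : 0 ≤ m)
    (S : Finset (Fin n)) (x : Fin n → ℝ) (hx0 : ∀ i, 0 ≤ x i) (hx : ∀ i ∈ S, x i ≤ m) :
    ∑ i ∈ S, ∑ j ∈ S, L i j * x j ≤ n * U * m := by
  rw [Finset.sum_comm]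
  have h1 : ∀ j ∈ S, ∑ i ∈ S, L i j * x j ≤ U * m := by
    intro j hj
    rw [← Finset.add_sum_erase _ _ hj]
    have : ∑ i ∈ S.erase j, L i j * x j ≤ 0 := Finset.sum_nonpos fun i hi =>
      mul_nonpos_of_nonpos_of_nonneg (hL.2.1 i j (Finset.ne_of_mem_erase hi)) (hx0 j)
    have : L j j * x j ≤ U * m := mul_le_mul (hU j j) (hx j hj) (hx0 j) hU0
    linarith
  have h2 := Finset.sum_le_card_nsmul S _ _ h1
  have h3 : (S.card : ℝ) ≤ n := by
    have := S.card_le_univ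
    simp at this
    exact_mod_cast this
  rw [nsmul_eq_mul] at h2
  have := mul_le_mul_of_nonneg_right h3 (mul_nonneg hU0 hm0)
  linarith

open Classical in
/-- Correctness of the Threshold Decay framework. -/
theorem thresholdDecay_correctness {n : ℕ} (T U : ℕ) (hT : 10 ≤ T) (hU : 2 ≤ U)
    (ε : ℝ) (hε0 : 0 < ε) (hε1 : ε < 1)
    (L : Matrix (Fin n) (Fin n) ℝ) (hL : IsRDDL L) (hInv : IsUnit L)
    (hLint : ∀ i j, ∃ z : ℤ, L i j = (z : ℝ) ∧ |z| ≤ (U : ℤ))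
    (b : Fin n → ℝ) (hbint : ∀ i, ∃ z : ℤ, b i = (z : ℝ) ∧ 0 ≤ z ∧ z ≤ (U : ℤ))
    (εL : ℝ) (hεL : εL = ε / (64 * T * ((n : ℝ) * U) ^ 2))
    (S : ℕ → Finset (Fin n))
    (xhat bhat xtil : ℕ → Fin n → ℝ)
    (θ : ℕ → ℝ)
    (hS0 : S 0 = Finset.univ)
    (hbhat0 : bhat 0 = b)
    (hbhat_nonneg : ∀ t ≤ T, ∀ i ∈ S t, 0 ≤ bhat t i)
    -- (i) `x̂⁽ᵗ⁾` is a normwise `ε_L`-approximate solution of the reduced system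
    (hsolve : ∀ t < T,
      Real.sqrt (∑ i : {i // i ∈ S t},
          (xhat t i.val -
            ((submatrixOn L (S t) (S t))⁻¹ *ᵥ fun j : {j // j ∈ S t} => bhat t j.val) i) ^ 2)
        ≤ εL * Real.sqrt (∑ i ∈ S t, (bhat t i) ^ 2))
    -- (ii) `θ t` is the smallest power of two strictly larger than `‖b̂⁽ᵗ⁾‖₁ / (4(nU)²)`
    (hθ : ∀ t < T, ∃ z : ℤ, θ t = (2 : ℝ) ^ z ∧
      (∑ i ∈ S t, |bhat t i|) / (4 * ((n : ℝ) * U) ^ 2) < (2 : ℝ) ^ z ∧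
      (2 : ℝ) ^ (z - 1) ≤ (∑ i ∈ S t, |bhat t i|) / (4 * ((n : ℝ) * U) ^ 2))
    -- (iii) `F⁽ᵗ⁾ = {i ∈ S⁽ᵗ⁾ : x̂⁽ᵗ⁾ᵢ ≥ θ t}` and `S⁽ᵗ⁺¹⁾ = S⁽ᵗ⁾ \ F⁽ᵗ⁾`
    (hSsucc : ∀ t < T, S (t + 1) = S t \ ((S t).filter fun i => θ t ≤ xhat t i))
    -- (iv) `x̃⁽ᵗ⁺¹⁾` agrees with `x̃⁽ᵗ⁾` on `[n] \ S⁽ᵗ⁾` and with `x̂⁽ᵗ⁾` on `F⁽ᵗ⁾`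
    (hxtil_old : ∀ t < T, ∀ i, i ∉ S t → xtil (t + 1) i = xtil t i)
    (hxtil_new : ∀ t < T, ∀ i ∈ S t, θ t ≤ xhat t i → xtil (t + 1) i = xhat t i)
    -- (v) `b̂⁽ᵗ⁺¹⁾ ≈_{ε/(8T)} b_{S⁽ᵗ⁺¹⁾} − L_{S⁽ᵗ⁺¹⁾, [n]∖S⁽ᵗ⁺¹⁾} x̃⁽ᵗ⁺¹⁾`
    (hbhat_succ : ∀ t < T, ∀ i ∈ S (t + 1),
      EApprox (ε / (8 * T)) (bhat (t + 1) i)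
        (b i - ∑ j ∈ (S (t + 1))ᶜ, L i j * xtil (t + 1) j)) :
    -- (a) all large entries of the exact solution have been extracted
    (∀ i, (((n : ℝ) * U) ^ (T + 1))⁻¹ * (∑ k, |b k|) ≤ (L⁻¹ *ᵥ b) i → i ∉ S T) ∧
    -- (b) the output is an entrywise `e^ε`-approximation on `A = [n] \ S⁽ᵀ⁾`
    (∀ i, i ∉ S T → EApprox ε (xtil T i) ((L⁻¹ *ᵥ b) i)) ∧
    -- (c) if `T = n` then the output approximates the whole solution
    (T = n →
      (∀ i ∈ S T, (L⁻¹ *ᵥ b) i = 0) ∧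
      ∀ i, EApprox ε (if i ∈ S T then 0 else xtil T i) ((L⁻¹ *ᵥ b) i)) := by
  have hb0 : ∀ i, 0 ≤ b i := by
    intro i
    obtain ⟨z, hz, h0, _⟩ := hbint i
    rw [hz]; exact_mod_cast h0
  have hLU : ∀ i j, L i j ≤ (U : ℝ) := by
    intro i j
    obtain ⟨z, hz, h0⟩ := hLint i j
    rw [hz]; exact_mod_cast (le_abs_self z).trans h0
  have hU' : (2 : ℝ) ≤ U := by exact_mod_cast hU
  have hT' : (10 : ℝ) ≤ T := by exact_mod_cast hT
  set x := L⁻¹ *ᵥ b with hxdef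
  have hx0 : ∀ i, 0 ≤ x i := td_inv_mulVec_nonneg L hL b hb0
  have hLx : ∀ i, ∑ j, L i j * x j = b i := fun i => congrFun (td_inv_mulVec L hInv b) i
  have hLxS : ∀ (R : Finset (Fin n)) i,
      b i - ∑ j ∈ Rᶜ, L i j * x j = ∑ j ∈ R, L i j * x j := by
    intro R i
    rw [← hLx i, ← Finset.sum_add_sum_compl R]; ring
  set N : ℝ := (n : ℝ) * U with hN
  set B : ℕ → ℝ := fun t => ∑ i ∈ S t, |bhat t i| with hB
  have hB0 : ∀ t, 0 ≤ B t := fun t => Finset.sum_nonneg fun _ _ => abs_nonneg _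
  have hBpos : ∀ t < T, 0 < B t := by
    intro t ht
    obtain ⟨z, _, _, h3⟩ := hθ t ht
    have h4 : (0 : ℝ) < 2 ^ (z - 1) := by positivity
    rcases (hB0 t).lt_or_eq with h | h
    · exact h
    · have h5 : ∑ i ∈ S t, |bhat t i| = 0 := h.symm
      rw [h5, zero_div] at h3
      linarith
  have hn : 1 ≤ n := by
    rcases Nat.eq_zero_or_pos n with h | h
    · subst h
      have := hBpos 0 (by omega)
      simp [hB, hS0] at this
    · exact h
  have hn' : (1 : ℝ) ≤ n := by exact_mod_cast hn
  have hN2 : 2 ≤ N := by rw [hN]; nlinarith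
  have hNpos : 0 < N := by linarith
  set δ : ℝ := ε / (8 * T) with hδ
  have hδT : δ * T = ε / 8 := by rw [hδ]; field_simp
  have hδ0 : 0 < δ := by rw [hδ]; positivity
  have hδ1 : δ ≤ 1 := by nlinarith
  have hεL' : εL = δ / (8 * N ^ 2) := by
    rw [hεL, hδ]; field_simp; norm_num
  have hεL0 : 0 ≤ εL := by rw [hεL']; positivity
  have hθ1 : ∀ t < T, B t < 4 * N ^ 2 * θ t ∧ 2 * N ^ 2 * θ t ≤ B t ∧ 0 < θ t := by
    intro t ht
    obtain ⟨z, h1, h2, h3⟩ := hθ t ht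
    rw [zpow_sub_one₀ (by norm_num)] at h3
    rw [← h1] at h2 h3
    have hp : 0 < 4 * N ^ 2 := by positivity
    rw [div_lt_iff₀ hp] at h2
    rw [le_div_iff₀ hp] at h3
    refine ⟨by linarith, by linarith, ?_⟩
    rw [h1]; positivity
  -- from the invariant, `bhat` approximates the exact reduced right-hand side
  have hrhs : ∀ t ≤ T, (∀ i ∉ S t, EApprox (2 * δ * t) (xtil t i) (x i)) →
      ∀ i ∈ S t, EApprox (2 * δ * t + δ) (bhat t i) (∑ j ∈ S t, L i j * x j) := by
    intro t ht hinv i hi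
    rw [← hLxS]
    rcases t with _ | t
    · rw [hS0, hbhat0]
      have : EApprox 0 (b i) (b i) := by simp [EApprox]
      simp only [Finset.compl_univ, Finset.sum_empty, sub_zero]
      exact this.mono' (hb0 i) (by simp; exact hδ0.le)
    · have h1 := hbhat_succ t (by omega) i hi
      have h2 := td_rhs_approx L hL (S (t + 1)) b x (xtil (t + 1)) _ (by positivity) hb0 hinv i hi
      rw [add_comm]
      exact h1.trans' h2
  have hsol : ∀ t < T, (∀ i ∉ S t, EApprox (2 * δ * t) (xtil t i) (x i)) →
      ∃ y : Fin n → ℝ, (∀ i ∈ S t, EApprox (2 * δ * t + δ) (y i) (x i)) ∧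
        (∀ i ∈ S t, |xhat t i - y i| ≤ εL * B t) := by
    intro t ht hinv
    obtain ⟨y, hy1, hy2⟩ := td_exists_sol L hL hInv (S t) (bhat t) (xhat t) εL hεL0 (hsolve t ht)
    refine ⟨y, ?_, hy2⟩
    apply td_sol_approx L hL hInv
    intro i hi
    rw [hy1 i hi]
    exact hrhs t ht.le hinv i hi
  have hinv : ∀ t ≤ T, ∀ i ∉ S t, EApprox (2 * δ * t) (xtil t i) (x i) ∧ 0 ≤ xtil t i := by
    intro t
    induction t with
    | zero => intro _ i hi; rw [hS0] at hi; simp at hi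
    | succ t ih =>
      intro ht i hi
      have ih' := ih (by omega)
      by_cases hit : i ∈ S t
      · have hge : θ t ≤ xhat t i := by
          rw [hSsucc t (by omega)] at hi
          by_contra hc
          exact hi (by simp [hit, hc])
        rw [hxtil_new t (by omega) i hit hge]
        obtain ⟨y, hy1, hy2⟩ := hsol t (by omega) (fun i hi => (ih' i hi).1)
        obtain ⟨h1, h2, h3⟩ := hθ1 t (by omega)
        have hx' : 0 ≤ xhat t i := h3.le.trans hge
        refine ⟨?_, hx'⟩
        have h4 : EApprox δ (xhat t i) (y i) := by
          apply td_close_approx hδ0.le hδ1 hx'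
          refine (hy2 i hit).trans ?_
          have : εL * B t ≤ εL * (4 * N ^ 2 * θ t) := mul_le_mul_of_nonneg_left h1.le hεL0
          refine this.trans ?_
          have : εL * (4 * N ^ 2 * θ t) = δ / 2 * θ t := by
            rw [hεL']; field_simp; norm_num
          rw [this]
          exact mul_le_mul_of_nonneg_left hge (by positivity)
        have h5 := h4.trans' (hy1 i hit)
        convert h5 using 1
        push_cast; ring
      · rw [hxtil_old t (by omega) i hit]
        obtain ⟨h1, h2⟩ := ih' i hit
        refine ⟨h1.mono' h2 ?_, h2⟩
        push_cast; nlinarith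
  have hexp : Real.exp (1 / 4) ≤ 4 / 3 := by
    have h1 := Real.add_one_le_exp (-(1 / 4) : ℝ)
    have hm : Real.exp (1 / 4) * Real.exp (-(1 / 4)) = 1 := by rw [← Real.exp_add]; simp
    nlinarith [Real.exp_pos (1 / 4)]
  have hμ : ∀ t ≤ T, 2 * δ * t + δ ≤ 1 / 4 + δ := by
    intro t ht
    have : (t : ℝ) ≤ T := by exact_mod_cast ht
    nlinarith
  have hμ1 : ∀ t < T, 2 * δ * t + δ ≤ 1 / 4 := by
    intro t ht
    have : (t : ℝ) + 1 ≤ T := by exact_mod_cast ht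
    nlinarith
  -- entries that are not extracted are small
  have hsmall : ∀ t < T, ∀ i ∈ S t, xhat t i < θ t → x i < 7 / 10 * B t / N ^ 2 := by
    intro t ht i hi hlt
    obtain ⟨y, hy1, hy2⟩ := hsol t ht (fun i hi => (hinv t ht.le i hi).1)
    obtain ⟨h1, h2, h3⟩ := hθ1 t ht
    have hyx := hy1 i hi
    have hy0 : 0 ≤ y i := hyx.symm'.nonneg' (hx0 i)
    have h4 := (hyx.mono' hy0 (hμ1 t ht)).2
    have h5 := (abs_le.1 (hy2 i hi)).1
    have h6 : x i ≤ 4 / 3 * y i := h4.trans (mul_le_mul_of_nonneg_right hexp hy0)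
    rw [lt_div_iff₀ (by positivity)]
    have h7 : y i < θ t + εL * B t := by linarith
    have h8 : y i * N ^ 2 < (θ t + εL * B t) * N ^ 2 := by
      apply mul_lt_mul_of_pos_right h7; positivity
    have h9 : εL * B t * N ^ 2 = δ / 8 * B t := by rw [hεL']; field_simp
    have h10 : δ ≤ 1 / 80 := by nlinarith
    have h11 : δ / 8 * B t ≤ 1 / 640 * B t :=
      mul_le_mul_of_nonneg_right (by linarith) (hB0 t)
    have h12 : x i * N ^ 2 ≤ 4 / 3 * y i * N ^ 2 :=
      mul_le_mul_of_nonneg_right h6 (by positivity)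
    have h13 := hBpos t ht
    nlinarith
  have hbsum : ∀ t < T, ∀ m, 0 ≤ m → (∀ i ∈ S t, x i ≤ m) → B t ≤ 4 / 3 * (N * m) := by
    intro t ht m hm hxm
    have h1 := td_sum_le L hL U m hLU (by positivity) hm (S t) x hx0 hxm
    have h2 : B t ≤ ∑ i ∈ S t, 4 / 3 * ∑ j ∈ S t, L i j * x j := by
      apply Finset.sum_le_sum
      intro i hi
      have h0 := hbhat_nonneg t ht.le i hi
      rw [abs_of_nonneg h0]
      have h3 := (hrhs t ht.le (fun i hi => (hinv t ht.le i hi).1) i hi)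
      have h4 := h3.nonneg' h0
      have h5 := (h3.symm'.mono' h4 (hμ1 t ht)).2
      exact h5.trans (mul_le_mul_of_nonneg_right hexp h4)
    rw [← Finset.mul_sum] at h2
    have : (n : ℝ) * U * m = N * m := rfl
    linarith
  have hmem : ∀ t < T, ∀ i ∈ S (t + 1), i ∈ S t ∧ xhat t i < θ t := by
    intro t ht i hi
    rw [hSsucc t ht] at hi
    simp only [Finset.mem_sdiff, Finset.mem_filter, not_and, not_le] at hi
    exact ⟨hi.1, hi.2 hi.1⟩
  have hdecay : ∀ t < T, B t ≤ (N ^ t)⁻¹ * ∑ k, |b k| := by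
    intro t
    induction t with
    | zero => intro _; simp [hB, hS0, hbhat0]
    | succ t ih =>
      intro ht
      have ih' := ih (by omega)
      have h1 := hbsum (t + 1) ht (7 / 10 * B t / N ^ 2)
        (div_nonneg (mul_nonneg (by norm_num) (hB0 t)) (by positivity))
        (fun i hi => (hsmall t (by omega) i (hmem t (by omega) i hi).1
          (hmem t (by omega) i hi).2).le)
      have h2 : 4 / 3 * (N * (7 / 10 * B t / N ^ 2)) = 28 / 30 * (B t / N) := by
        field_simp; ring
      rw [h2] at h1
      have h3 : 0 ≤ B t / N := div_nonneg (hB0 t) hNpos.le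
      have h4 : B t / N ≤ ((N ^ t)⁻¹ * ∑ k, |b k|) / N := by gcongr
      have h5 : ((N ^ t)⁻¹ * ∑ k, |b k|) / N = (N ^ (t + 1))⁻¹ * ∑ k, |b k| := by
        rw [pow_succ]; field_simp
      linarith
  have hbb : ∀ i, i ∉ S T → EApprox ε (xtil T i) (x i) := by
    intro i hi
    obtain ⟨h1, h2⟩ := hinv T le_rfl i hi
    exact h1.mono' h2 (by nlinarith)
  refine ⟨?_, hbb, ?_⟩
  · intro i hi hiS
    obtain ⟨t, rfl⟩ : ∃ t, T = t + 1 := ⟨T - 1, by omega⟩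
    obtain ⟨h1, h2⟩ := hmem t (by omega) i hiS
    have h3 := hsmall t (by omega) i h1 h2
    have h4 := hdecay t (by omega)
    have h5 : 7 / 10 * B t / N ^ 2 ≤ B t / N ^ 2 := by
      have := hB0 t
      gcongr; linarith
    have h6 : B t / N ^ 2 ≤ ((N ^ t)⁻¹ * ∑ k, |b k|) / N ^ 2 := by gcongr
    have h7 : ((N ^ t)⁻¹ * ∑ k, |b k|) / N ^ 2 = (N ^ (t + 1 + 1))⁻¹ * ∑ k, |b k| := by
      rw [show N ^ (t + 1 + 1) = N ^ t * N ^ 2 by ring, mul_inv, div_eq_mul_inv]; ring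
    linarith
  · intro hTn
    have hcard : ∀ t ≤ T, (S t).card + t ≤ n := by
      intro t
      induction t with
      | zero => intro _; simp [hS0]
      | succ t ih =>
        intro ht
        have ih' := ih (by omega)
        have hss : S (t + 1) ⊂ S t := by
          refine Finset.ssubset_iff_subset_ne.2 ⟨fun i hi => (hmem t (by omega) i hi).1, ?_⟩
          intro heq
          have h1 := hbsum t (by omega) (7 / 10 * B t / N ^ 2)
            (div_nonneg (mul_nonneg (by norm_num) (hB0 t)) (by positivity))
            (fun i hi => (hsmall t (by omega) i hi (hmem t (by omega) i (heq ▸ hi)).2).le)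
          have h2 : 4 / 3 * (N * (7 / 10 * B t / N ^ 2)) = 28 / 30 * (B t / N) := by
            field_simp; ring
          rw [h2] at h1
          have h3 : B t / N ≤ B t := div_le_self (hB0 t) (by linarith)
          linarith [hBpos t (by omega)]
        have := Finset.card_lt_card hss
        omega
    have hempty : S T = ∅ := by
      have := hcard T le_rfl
      exact Finset.card_eq_zero.1 (by omega)
    refine ⟨by simp [hempty], ?_⟩
    intro i
    have hi : i ∉ S T := by simp [hempty]
    rw [if_neg hi]
    exact hbb i hi
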